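/- (Lemma 5.6) Let u : Θ → ℝ be bounded and d_p-uniformly continuous. Then ρ_n := sup{ |u^{n,λ_i}(T,x) − u^{λ_i}(T,x)| } → 0 as n → ∞, where the supremum is taken over all i ≤ n^{1+1/(5p)}, all partitions 0 = s_1 < ⋯ < s_i ≤ T, and all x_1,…,x_{i−1}, x ∈ ℝ^d such that |x_i|_p ≤ n^{1/2 + 6/(5p)} with x_i := (x_1,…,x_{i−1},x). -/

import Mathlib

open MeasureTheory Set Filter Topology

noncomputable section

/-- `ℝ^d` with the Euclidean norm. -/
abbrev E (d : ℕ) := EuclideanSpace ℝ (Fin d)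

/-- A point `θ = (t, ω)` of `Θ = [0,T] × Ω`, where `Ω` is the set of continuous
paths `[0,T] → ℝ^d` starting from the origin. -/
structure Theta (T : ℝ) (d : ℕ) where
  t : ℝ
  path : ℝ → E d
  ht : t ∈ Set.Icc 0 T
  cont : ContinuousOn path (Set.Icc 0 T)
  init : path 0 = 0

/-- `‖f‖_q^q := ‖f T‖^q + ∫_0^T ‖f s‖^q ds`. -/
def pnormPow (T q : ℝ) {d : ℕ} (f : ℝ → E d) : ℝ :=
  ‖f T‖ ^ q + ∫ s in (0:ℝ)..T, ‖f s‖ ^ q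

/-- `‖f‖_q := (‖f T‖^q + ∫_0^T ‖f s‖^q ds)^(1/q)`. -/
def pnorm (T q : ℝ) {d : ℕ} (f : ℝ → E d) : ℝ := (pnormPow T q f) ^ (1 / q)

/-- The pseudo-distance `d_p(θ,θ') = |t - t'| + ‖ω_{t∧·} - ω'_{t'∧·}‖_p`. -/
def dpDist (T p : ℝ) {d : ℕ} (θ θ' : Theta T d) : ℝ :=
  |θ.t - θ'.t| + pnorm T p (fun s => θ.path (min θ.t s) - θ'.path (min θ'.t s))

/-- The set `𝓛_{t,s}` of monotone time changes: for `s > 0`, nondecreasing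
`ℓ : [0,T] → ℝ` restricting to an increasing bijection from `[0,t]` onto `[0,s]`
with `ℓ(r) = r - t + s` on `(t,T]`; for `s = 0` the single function `ℓ^{t,0}`. -/
def LL (T t s : ℝ) : Set (ℝ → ℝ) :=
  if s = 0 then {fun r => if r ≤ t then 0 else r - t}
  else {ℓ | MonotoneOn ℓ (Set.Icc 0 T) ∧ StrictMonoOn ℓ (Set.Icc 0 t) ∧
        Set.BijOn ℓ (Set.Icc 0 t) (Set.Icc 0 s) ∧ ∀ r ∈ Set.Ioc t T, ℓ r = r - t + s}

/-- `‖ℓ - I‖_∞ := sup_{0 ≤ r ≤ T} |ℓ(r) - r|`. -/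
def supId (T : ℝ) (ℓ : ℝ → ℝ) : ℝ := ⨆ r : Set.Icc (0:ℝ) T, |ℓ r - (r : ℝ)|

/-- The penalization `Φ(s,η,θ,ℓ) := ‖ℓ - I‖_∞^{2/(3p+3)} + ‖η_{s∧ℓ(·)} - ω_{t∧·}‖_{p+1}^{p+1}`. -/
def Phi (T p : ℝ) {d : ℕ} (s : ℝ) (η : ℝ → E d) (θ : Theta T d) (ℓ : ℝ → ℝ) : ℝ :=
  (supId T ℓ) ^ (2 / (3 * p + 3)) +
    pnormPow T (p + 1) (fun r => η (min s (ℓ r)) - θ.path (min θ.t r))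

/-- The regularization
`u^n(s,η) := sup { u(θ) - n Φ(s,η,θ,ℓ) : θ ∈ Θ \ {𝟎}, ℓ ∈ 𝓛_{t,s} }`. -/
def reg (T p : ℝ) {d : ℕ} (u : Theta T d → ℝ) (n : ℕ) (s : ℝ) (η : ℝ → E d) : ℝ :=
  sSup { x | ∃ θ : Theta T d, ∃ ℓ : ℝ → ℝ, (θ.t, θ.path) ≠ (0, 0) ∧ ℓ ∈ LL T θ.t s ∧
        x = u θ - (n : ℝ) * Phi T p s η θ ℓ }

/-- A càdlàg path on `[0,T]`: right-continuous with left limits. -/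
def Cadlag (T : ℝ) {d : ℕ} (η : ℝ → E d) : Prop :=
  (∀ x ∈ Set.Ico (0:ℝ) T, ContinuousWithinAt η (Set.Ici x) x) ∧
  (∀ x ∈ Set.Ioc (0:ℝ) T, ∃ l : E d, Filter.Tendsto η (nhdsWithin x (Set.Iio x)) (𝓝 l))

/-- The piecewise constant path `η^{λ_i}(x)_s = Σ_j x_j 1_{{s ≥ s_j}}`. -/
def pcPath {d i : ℕ} (sVec : Fin i → ℝ) (xVec : Fin i → E d) : ℝ → E d :=
  fun r => ∑ j : Fin i, if sVec j ≤ r then xVec j else 0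

/-- `L = u^{λ_i}(T,x)`, i.e. `L` is the limit of `u(T, ω^k)` along a sequence of
continuous paths `ω^k ∈ Ω` with `‖η^{λ_i}(x) - ω^k‖_p → 0`. -/
def IsExtValue (T p : ℝ) {d : ℕ} (u : Theta T d → ℝ) (η : ℝ → E d) (L : ℝ) : Prop :=
  ∃ θk : ℕ → Theta T d, (∀ k, (θk k).t = T) ∧
    Filter.Tendsto (fun k => pnorm T p (fun r => η r - (θk k).path r)) Filter.atTop (𝓝 0) ∧
    Filter.Tendsto (fun k => u (θk k)) Filter.atTop (𝓝 L)

/-!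
The norm `‖·‖_q` is the `L^q` norm of Lebesgue measure on `(0, T]` plus an atom at `T`. Fix a
piecewise constant path `η` with `i` jumps `x_j`, let `L` be the value at `(T, η)` of the extension
of `u`, and let `|u| ≤ M`.

Continuous paths started at `0` are dense in `L^(p+1)`, so testing the supremum with `ℓ = I` and
paths close to `η` gives `L ≤ u^n(T, η)` for every `n`. Conversely, only `(θ, ℓ)` with
`Φ(T, η, θ, ℓ) ≤ 2 M / n` can bring the supremum above `L`. For these, `‖ℓ - I‖_∞` is of order
`n^(-(3p+3)/2)`, which bounds `|t - T|`; the second term of `Φ` controls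
`‖η_{T∧ℓ(·)} - ω_{t∧·}‖_p` through Hölder's inequality; and since the time change displaces each
jump by at most `‖ℓ - I‖_∞`,
`‖η_{T∧ℓ(·)} - η‖_p^p ≤ i^(p-1) * Σ_j |x_j|^p * 2 ‖ℓ - I‖_∞`.
For `i ≤ n^a` and `|x|_p ≤ n^b` the last bound tends to `0` as soon as
`a (p - 1) + b p < (3p + 3) / 2`. Hence `θ` is uniformly `d_p`-close to `(T, η)`, and uniform
continuity bounds `u θ - L`.
-/

open scoped ENNReal

section TerminalMeasure

/-- Lebesgue measure on `(0, T]` plus a unit atom at `T`. Its `L^q` norm is `‖·‖_q`, so that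
Minkowski's and Hölder's inequalities for `pnorm` are those of `eLpNorm`. -/
def terminalMeasure (T : ℝ) : Measure ℝ := volume.restrict (Ioc 0 T) + Measure.dirac T

instance (T : ℝ) : IsFiniteMeasure (terminalMeasure T) := by
  unfold terminalMeasure; infer_instance

variable {T p q : ℝ} {d : ℕ} {f g h : ℝ → E d}

theorem terminalMeasure_univ (hT : 0 ≤ T) :
    terminalMeasure T univ = ENNReal.ofReal (T + 1) := by
  simp [terminalMeasure, ENNReal.ofReal_add hT zero_le_one]

theorem ae_terminalMeasure_of_forall_mem_Ioc (hT : 0 < T) {P : ℝ → Prop}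
    (hP : ∀ r ∈ Ioc 0 T, P r) : ∀ᵐ r ∂terminalMeasure T, P r := by
  rw [terminalMeasure, ae_add_measure_iff, ae_dirac_eq, eventually_pure]
  exact ⟨ae_restrict_of_forall_mem measurableSet_Ioc hP, hP T (right_mem_Ioc.2 hT)⟩

theorem memLp_top_terminalMeasure (hT : 0 < T)
    (hf : AEStronglyMeasurable f (volume.restrict (Ioc 0 T))) {C : ℝ}
    (hC : ∀ r ∈ Ioc 0 T, ‖f r‖ ≤ C) : MemLp f ∞ (terminalMeasure T) :=
  memLp_top_of_bound (hf.add_measure aestronglyMeasurable_dirac) C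
    (ae_terminalMeasure_of_forall_mem_Ioc hT hC)

theorem memLp_top_terminalMeasure_of_continuousOn (hT : 0 < T)
    (hf : ContinuousOn f (Icc 0 T)) : MemLp f ∞ (terminalMeasure T) := by
  obtain ⟨C, hC⟩ := isCompact_Icc.exists_bound_of_continuousOn hf
  exact memLp_top_terminalMeasure hT
    ((hf.mono Ioc_subset_Icc_self).aestronglyMeasurable measurableSet_Ioc)
    fun r hr => hC r (Ioc_subset_Icc_self hr)

theorem pnormPow_nonneg (hT : 0 ≤ T) : 0 ≤ pnormPow T q f :=
  add_nonneg (by positivity) (intervalIntegral.integral_nonneg hT fun _ _ => by positivity)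

theorem pnorm_nonneg (hT : 0 ≤ T) : 0 ≤ pnorm T q f :=
  Real.rpow_nonneg (pnormPow_nonneg hT) _

theorem pnorm_rpow (hT : 0 ≤ T) (hq : q ≠ 0) : pnorm T q f ^ q = pnormPow T q f := by
  rw [pnorm, one_div, Real.rpow_inv_rpow (pnormPow_nonneg hT) hq]

theorem pnormPow_congr (hT : 0 ≤ T) (hfg : EqOn f g (Icc 0 T)) :
    pnormPow T q f = pnormPow T q g := by
  rw [pnormPow, pnormPow, hfg (right_mem_Icc.2 hT)]
  congr 1
  refine intervalIntegral.integral_congr fun r hr => ?_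
  rw [uIcc_of_le hT] at hr
  simp only [hfg hr]

theorem pnorm_congr (hT : 0 ≤ T) (hfg : EqOn f g (Icc 0 T)) : pnorm T q f = pnorm T q g := by
  rw [pnorm, pnorm, pnormPow_congr hT hfg]

theorem pnorm_sub_comm (f g : ℝ → E d) : pnorm T q (f - g) = pnorm T q (g - f) := by
  simp only [pnorm, pnormPow, Pi.sub_apply, fun r => norm_sub_rev (f r) (g r)]

theorem pnormPow_eq_integral (hT : 0 ≤ T) (hq : 0 < q)
    (hf : MemLp f (ENNReal.ofReal q) (terminalMeasure T)) :
    pnormPow T q f = ∫ r, ‖f r‖ ^ q ∂terminalMeasure T := by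
  have hint : Integrable (fun r => ‖f r‖ ^ q) (terminalMeasure T) := by
    simpa only [ENNReal.toReal_ofReal hq.le] using
      hf.integrable_norm_rpow (ENNReal.ofReal_pos.2 hq).ne' ENNReal.ofReal_ne_top
  rw [terminalMeasure, integrable_add_measure] at hint
  rw [terminalMeasure, integral_add_measure hint.1 hint.2, integral_dirac, pnormPow,
    intervalIntegral.integral_of_le hT, add_comm]

theorem ofReal_pnorm (hT : 0 ≤ T) (hq : 0 < q)
    (hf : MemLp f (ENNReal.ofReal q) (terminalMeasure T)) :
    ENNReal.ofReal (pnorm T q f) = eLpNorm f (ENNReal.ofReal q) (terminalMeasure T) := by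
  rw [hf.eLpNorm_eq_integral_rpow_norm (ENNReal.ofReal_pos.2 hq).ne' ENNReal.ofReal_ne_top,
    ENNReal.toReal_ofReal hq.le, pnorm, pnormPow_eq_integral hT hq hf, one_div]

theorem pnorm_sub_le_pnorm_sub_add_pnorm_sub (hT : 0 ≤ T) (hp : 1 ≤ p)
    (hf : MemLp f (ENNReal.ofReal p) (terminalMeasure T))
    (hg : MemLp g (ENNReal.ofReal p) (terminalMeasure T))
    (hh : MemLp h (ENNReal.ofReal p) (terminalMeasure T)) :
    pnorm T p (f - h) ≤ pnorm T p (f - g) + pnorm T p (g - h) := by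
  have hp0 : 0 < p := zero_lt_one.trans_le hp
  rw [← ENNReal.ofReal_le_ofReal_iff (add_nonneg (pnorm_nonneg hT) (pnorm_nonneg hT)),
    ENNReal.ofReal_add (pnorm_nonneg hT) (pnorm_nonneg hT), ofReal_pnorm hT hp0 (hf.sub hh),
    ofReal_pnorm hT hp0 (hf.sub hg), ofReal_pnorm hT hp0 (hg.sub hh)]
  simpa only [sub_add_sub_cancel] using
    eLpNorm_add_le (hf.sub hg).1 (hg.sub hh).1 (ENNReal.one_le_ofReal.2 hp)

theorem pnorm_le_pnorm_mul_rpow (hT : 0 ≤ T) (hp : 0 < p) (hpq : p ≤ q)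
    (hf : MemLp f (ENNReal.ofReal q) (terminalMeasure T)) :
    pnorm T p f ≤ pnorm T q f * (T + 1) ^ (1 / p - 1 / q) := by
  have hpq' : ENNReal.ofReal p ≤ ENNReal.ofReal q := ENNReal.ofReal_le_ofReal hpq
  have holder := eLpNorm_le_eLpNorm_mul_rpow_measure_univ hpq' hf.1
  rw [← ofReal_pnorm hT hp (hf.mono_exponent hpq'), ← ofReal_pnorm hT (hp.trans_le hpq) hf,
    ENNReal.toReal_ofReal hp.le, ENNReal.toReal_ofReal (hp.le.trans hpq), terminalMeasure_univ hT,
    ENNReal.ofReal_rpow_of_pos (by positivity), ← ENNReal.ofReal_mul (pnorm_nonneg hT)] at holder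
  exact (ENNReal.ofReal_le_ofReal_iff
    (mul_nonneg (pnorm_nonneg hT) (by positivity))).1 holder

theorem tendsto_pnorm_zero_of_bounded (hT : 0 < T) (hq : 0 < q) {F : ℕ → ℝ → E d} {C : ℝ}
    (hmeas : ∀ k, AEStronglyMeasurable (F k) (volume.restrict (Ioc 0 T)))
    (hC : ∀ k, ∀ r ∈ Ioc 0 T, ‖F k r‖ ≤ C)
    (hlim : ∀ r ∈ Ioc 0 T, Tendsto (fun k => F k r) atTop (𝓝 0)) :
    Tendsto (fun k => pnorm T q (F k)) atTop (𝓝 0) := by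
  have hF : ∀ k, MemLp (F k) ∞ (terminalMeasure T) := fun k =>
    memLp_top_terminalMeasure hT (hmeas k) (hC k)
  suffices hPow : Tendsto (fun k => pnormPow T q (F k)) atTop (𝓝 0) by
    simpa only [pnorm, Real.zero_rpow (one_div_pos.2 hq).ne'] using
      hPow.rpow_const (p := 1 / q) (Or.inr (one_div_pos.2 hq).le)
  simp only [fun k => pnormPow_eq_integral hT.le hq ((hF k).mono_exponent le_top)]
  rw [← integral_zero ℝ ℝ (μ := terminalMeasure T)]
  refine tendsto_integral_of_dominated_convergence (fun _ => C ^ q)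
    (fun k => ((hF k).1.norm.aemeasurable.pow_const q).aestronglyMeasurable)
    (integrable_const _)
    (fun k => ae_terminalMeasure_of_forall_mem_Ioc hT fun r hr => ?_)
    (ae_terminalMeasure_of_forall_mem_Ioc hT fun r hr => ?_)
  · rw [Real.norm_of_nonneg (by positivity)]
    exact Real.rpow_le_rpow (norm_nonneg _) (hC k r hr) hq.le
  · simpa only [norm_zero, Real.zero_rpow hq.ne'] using
      (hlim r hr).norm.rpow_const (p := q) (Or.inr hq.le)

end TerminalMeasure

section ExtendedValue

variable {T p : ℝ} {d : ℕ} {u : Theta T d → ℝ} {η : ℝ → E d} {L : ℝ}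

namespace Theta

/-- The stopped path `ω_{t∧·}` of `θ = (t, ω)`. -/
def stopped (θ : Theta T d) : ℝ → E d := fun r => θ.path (min θ.t r)

theorem eqOn_stopped_path {θ : Theta T d} (hθ : θ.t = T) : EqOn θ.stopped θ.path (Icc 0 T) :=
  fun r hr => by rw [stopped, hθ, min_eq_right hr.2]

theorem continuousOn_stopped (θ : Theta T d) : ContinuousOn θ.stopped (Icc 0 T) :=
  θ.cont.comp (by fun_prop) fun _ hr =>
    ⟨le_min θ.ht.1 hr.1, (min_le_right _ _).trans hr.2⟩

theorem memLp_stopped (hT : 0 < T) (θ : Theta T d) (q : ℝ≥0∞) :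
    MemLp θ.stopped q (terminalMeasure T) :=
  (memLp_top_terminalMeasure_of_continuousOn hT θ.continuousOn_stopped).mono_exponent le_top

/-- The `d_p` distance from `θ` to `(T, η)`, where `η` need not be continuous. -/
def terminalDist (p : ℝ) (θ : Theta T d) (η : ℝ → E d) : ℝ :=
  |θ.t - T| + pnorm T p (θ.stopped - η)

theorem terminalDist_nonneg (hT : 0 ≤ T) (θ : Theta T d) (η : ℝ → E d) :
    0 ≤ θ.terminalDist p η :=
  add_nonneg (abs_nonneg _) (pnorm_nonneg hT)

theorem terminalDist_eq_of_t_eq (hT : 0 ≤ T) {θ : Theta T d} (hθ : θ.t = T) :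
    θ.terminalDist p η = pnorm T p fun r => η r - θ.path r := by
  rw [terminalDist, hθ, sub_self, abs_zero, zero_add, pnorm_sub_comm]
  exact pnorm_congr hT fun r hr => congrArg (η r - ·) (eqOn_stopped_path hθ hr)

theorem dpDist_le_terminalDist_add (hT : 0 < T) (hp : 1 ≤ p)
    (hη : MemLp η (ENNReal.ofReal p) (terminalMeasure T)) (θ : Theta T d) {θ' : Theta T d}
    (hθ' : θ'.t = T) : dpDist T p θ θ' ≤ θ.terminalDist p η + θ'.terminalDist p η := by
  have triangle := pnorm_sub_le_pnorm_sub_add_pnorm_sub hT.le hp (θ.memLp_stopped hT _) hη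
    (θ'.memLp_stopped hT _)
  calc dpDist T p θ θ' = |θ.t - θ'.t| + pnorm T p (θ.stopped - θ'.stopped) := rfl
    _ ≤ |θ.t - θ'.t| + (pnorm T p (θ.stopped - η) + pnorm T p (η - θ'.stopped)) := by gcongr
    _ = θ.terminalDist p η + θ'.terminalDist p η := by
      simp only [terminalDist, hθ', sub_self, abs_zero, zero_add, pnorm_sub_comm η, add_assoc]

end Theta

/-- Uniform continuity of `u` for the pseudo-distance `d_p`, in `ε`-`δ` form. -/
def DpUniformContinuous (p : ℝ) (u : Theta T d → ℝ) : Prop :=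
  ∀ ε > 0, ∃ δ > 0, ∀ θ θ' : Theta T d, dpDist T p θ θ' ≤ δ → |u θ - u θ'| ≤ ε

namespace DpUniformContinuous

theorem of_modulus {ρ : ℝ → ℝ} (hmono : Monotone ρ) (hρ0 : Tendsto ρ (𝓝[>] 0) (𝓝 0))
    (huc : ∀ θ θ' : Theta T d, |u θ - u θ'| ≤ ρ (dpDist T p θ θ')) :
    DpUniformContinuous p u := by
  intro ε hε
  obtain ⟨δ, hρδ, hδ⟩ : ∃ δ, ρ δ < ε ∧ 0 < δ :=
    ((hρ0.eventually (gt_mem_nhds hε)).and self_mem_nhdsWithin).exists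
  exact ⟨δ, hδ, fun θ θ' hθ => (huc θ θ').trans ((hmono hθ).trans hρδ.le)⟩

theorem exists_abs_sub_extValue_le (hu : DpUniformContinuous p u) (hT : 0 < T) (hp : 1 ≤ p)
    {ε : ℝ} (hε : 0 < ε) :
    ∃ δ > 0, ∀ (θ : Theta T d) (η : ℝ → E d) (L : ℝ),
      MemLp η (ENNReal.ofReal p) (terminalMeasure T) → IsExtValue T p u η L →
      θ.terminalDist p η ≤ δ → |u θ - L| ≤ ε := by
  obtain ⟨δ, hδ, huδ⟩ := hu ε hε
  refine ⟨δ / 2, half_pos hδ, ?_⟩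
  rintro θ η L hη ⟨ω, hωT, hωη, hωL⟩ hθ
  refine le_of_tendsto (tendsto_const_nhds.sub hωL).abs ?_
  filter_upwards [hωη.eventually (gt_mem_nhds (half_pos hδ))] with k hk
  rw [← Theta.terminalDist_eq_of_t_eq hT.le (hωT k)] at hk
  refine huδ _ _ ((θ.dpDist_le_terminalDist_add hT hp hη (hωT k)).trans ?_)
  linarith

theorem tendsto_extValue (hu : DpUniformContinuous p u) (hT : 0 < T) (hp : 1 ≤ p)
    (hη : MemLp η (ENNReal.ofReal p) (terminalMeasure T)) (hL : IsExtValue T p u η L)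
    {θ : ℕ → Theta T d} (hθ : Tendsto (fun k => (θ k).terminalDist p η) atTop (𝓝 0)) :
    Tendsto (fun k => u (θ k)) atTop (𝓝 L) := by
  refine Metric.tendsto_nhds.2 fun ε hε => ?_
  obtain ⟨δ, hδ, huδ⟩ := hu.exists_abs_sub_extValue_le hT hp (half_pos hε)
  filter_upwards [hθ.eventually (gt_mem_nhds hδ)] with k hk
  exact (huδ (θ k) η L hη hL hk.le).trans_lt (half_lt_self hε)

end DpUniformContinuous

end ExtendedValue

section Density

variable {T q : ℝ} {d : ℕ} {η : ℝ → E d}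

theorem exists_continuous_pnorm_sub_le (hT : 0 ≤ T) (hq : 0 < q)
    (hη : MemLp η (ENNReal.ofReal q) (terminalMeasure T)) {ε : ℝ} (hε : 0 < ε) :
    ∃ g : ℝ → E d, Continuous g ∧ pnorm T q (η - g) ≤ ε := by
  obtain ⟨g, hηg, hg⟩ := hη.exists_boundedContinuous_eLpNorm_sub_le ENNReal.ofReal_ne_top
    (ENNReal.ofReal_pos.2 hε).ne'
  rw [← ofReal_pnorm hT hq (hη.sub hg), ENNReal.ofReal_le_ofReal_iff hε.le] at hηg
  exact ⟨g, g.continuous, hηg⟩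

theorem tendsto_pnorm_sub_min_one_smul (hT : 0 < T) (hq : 0 < q) {g : ℝ → E d}
    (hg : Continuous g) :
    Tendsto (fun k : ℕ => pnorm T q (g - fun r : ℝ => min 1 (k * |r|) • g r)) atTop (𝓝 0) := by
  obtain ⟨C, hC⟩ := (isCompact_Icc (a := 0) (b := T)).exists_bound_of_continuousOn hg.continuousOn
  refine tendsto_pnorm_zero_of_bounded hT hq (C := C + C)
    (fun k => (by fun_prop : Continuous _).aestronglyMeasurable) (fun k r hr => ?_)
    (fun r hr => ?_)
  · have hgr : ‖g r‖ ≤ C := hC r (Ioc_subset_Icc_self hr)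
    have hcutoff : ‖min 1 ((k : ℝ) * |r|) • g r‖ ≤ ‖g r‖ := by
      rw [norm_smul, Real.norm_of_nonneg (by positivity)]
      exact mul_le_of_le_one_left (norm_nonneg _) (min_le_left _ _)
    exact (norm_sub_le _ _).trans (add_le_add hgr (hcutoff.trans hgr))
  · have hlarge : ∀ᶠ k : ℕ in atTop, 1 ≤ (k : ℝ) * |r| :=
      (tendsto_natCast_atTop_atTop.atTop_mul_const (abs_pos.2 hr.1.ne')).eventually_ge_atTop 1
    refine tendsto_const_nhds.congr' ?_
    filter_upwards [hlarge] with k hk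
    rw [Pi.sub_apply, min_eq_left hk, one_smul, sub_self]

theorem exists_theta_pnorm_sub_le (hT : 0 < T) (hq : 1 ≤ q)
    (hη : MemLp η (ENNReal.ofReal q) (terminalMeasure T)) {ε : ℝ} (hε : 0 < ε) :
    ∃ θ : Theta T d, θ.t = T ∧ pnorm T q (η - θ.stopped) ≤ ε := by
  have hq0 : 0 < q := zero_lt_one.trans_le hq
  obtain ⟨g, hg, hηg⟩ := exists_continuous_pnorm_sub_le hT.le hq0 hη (half_pos hε)
  -- `g` need not vanish at `0`; damping it near `0` is free because `{0}` is a null set.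
  obtain ⟨k, hk⟩ := ((tendsto_pnorm_sub_min_one_smul hT hq0 hg).eventually
    (gt_mem_nhds (half_pos hε))).exists
  let θ : Theta T d :=
    { t := T
      path := fun r => min 1 (k * |r|) • g r
      ht := right_mem_Icc.2 hT.le
      cont := by fun_prop
      init := by simp }
  have hgθ : pnorm T q (g - θ.stopped) < ε / 2 := by
    refine (pnorm_congr hT.le fun r hr => ?_).trans_lt hk
    rw [Pi.sub_apply, Theta.eqOn_stopped_path (θ := θ) rfl hr, Pi.sub_apply]
  have triangle := pnorm_sub_le_pnorm_sub_add_pnorm_sub hT.le hq hη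
    ((memLp_top_terminalMeasure_of_continuousOn hT hg.continuousOn).mono_exponent le_top)
    (θ.memLp_stopped hT _)
  exact ⟨θ, rfl, by linarith⟩

end Density

section TimeChange

variable {T t s : ℝ} {ℓ : ℝ → ℝ}

theorem supId_nonneg (T : ℝ) (ℓ : ℝ → ℝ) : 0 ≤ supId T ℓ :=
  Real.iSup_nonneg fun _ => abs_nonneg _

theorem supId_id (T : ℝ) : supId T id = 0 := by
  simp [supId]

theorem abs_apply_sub_le_supId (hℓ : MonotoneOn ℓ (Icc 0 T)) {r : ℝ} (hr : r ∈ Icc 0 T) :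
    |ℓ r - r| ≤ supId T ℓ := by
  refine le_ciSup (f := fun r : Icc 0 T => |ℓ r - r|) ⟨|ℓ 0| + |ℓ T| + T, ?_⟩ ⟨r, hr⟩
  rintro _ ⟨⟨y, hy⟩, rfl⟩
  have hT : 0 ≤ T := hy.1.trans hy.2
  have hlower : ℓ 0 ≤ ℓ y := hℓ (left_mem_Icc.2 hT) hy hy.1
  have hupper : ℓ y ≤ ℓ T := hℓ hy (right_mem_Icc.2 hT) hy.2
  simp only [mem_Icc] at hy
  grind

theorem mem_LL_iff (hs : s ≠ 0) :
    ℓ ∈ LL T t s ↔ MonotoneOn ℓ (Icc 0 T) ∧ StrictMonoOn ℓ (Icc 0 t) ∧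
      BijOn ℓ (Icc 0 t) (Icc 0 s) ∧ ∀ r ∈ Ioc t T, ℓ r = r - t + s := by
  rw [LL, if_neg hs, mem_ofPred_eq]

theorem id_mem_LL (hT : T ≠ 0) : id ∈ LL T T T :=
  (mem_LL_iff hT).2 ⟨monotoneOn_id, strictMonoOn_id, bijOn_id _, fun r _ => by simp⟩

theorem monotoneOn_of_mem_LL (hs : s ≠ 0) (hℓ : ℓ ∈ LL T t s) : MonotoneOn ℓ (Icc 0 T) :=
  ((mem_LL_iff hs).1 hℓ).1

theorem apply_eq_of_mem_LL (ht : 0 ≤ t) (hs : 0 < s) (hℓ : ℓ ∈ LL T t s) : ℓ t = s := by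
  obtain ⟨-, hstrict, hbij, -⟩ := (mem_LL_iff hs.ne').1 hℓ
  obtain ⟨r, hr, hrs⟩ := hbij.surjOn (right_mem_Icc.2 hs.le)
  refine le_antisymm (hbij.mapsTo (right_mem_Icc.2 ht)).2 ?_
  exact hrs.symm.trans_le (hstrict.monotoneOn hr (right_mem_Icc.2 ht) hr.2)

theorem le_apply_terminal_of_mem_LL (ht : t ∈ Icc 0 T) (hs : 0 < s) (hℓ : ℓ ∈ LL T t s) :
    s ≤ ℓ T :=
  (apply_eq_of_mem_LL ht.1 hs hℓ).symm.trans_le <|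
    monotoneOn_of_mem_LL hs.ne' hℓ ht (right_mem_Icc.2 (ht.1.trans ht.2)) ht.2

theorem abs_sub_le_supId_of_mem_LL (ht : t ∈ Icc 0 T) (hs : 0 < s) (hℓ : ℓ ∈ LL T t s) :
    |t - s| ≤ supId T ℓ := by
  rw [abs_sub_comm]
  simpa only [apply_eq_of_mem_LL ht.1 hs hℓ] using
    abs_apply_sub_le_supId (monotoneOn_of_mem_LL hs.ne' hℓ) ht

end TimeChange

section JumpPath

variable {T p δ : ℝ} {d i : ℕ} (σ : Fin i → ℝ) (x : Fin i → E d)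

theorem measurable_pcPath : Measurable (pcPath σ x) :=
  Finset.measurable_sum _ fun _ _ =>
    Measurable.ite measurableSet_Ici measurable_const measurable_const

theorem norm_pcPath_le (r : ℝ) : ‖pcPath σ x r‖ ≤ ∑ j, ‖x j‖ := by
  refine (norm_sum_le _ _).trans (Finset.sum_le_sum fun j _ => ?_)
  split_ifs <;> simp

theorem memLp_pcPath_comp (hT : 0 < T) {τ : ℝ → ℝ}
    (hτ : AEMeasurable τ (volume.restrict (Ioc 0 T))) (q : ℝ≥0∞) :
    MemLp (fun r => pcPath σ x (τ r)) q (terminalMeasure T) :=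
  (memLp_top_terminalMeasure hT
    ((measurable_pcPath σ x).comp_aemeasurable hτ).aestronglyMeasurable
    fun r _ => norm_pcPath_le σ x (τ r)).mono_exponent le_top

theorem memLp_pcPath (hT : 0 < T) (q : ℝ≥0∞) : MemLp (pcPath σ x) q (terminalMeasure T) :=
  memLp_pcPath_comp σ x hT aemeasurable_id q

theorem norm_pcPath_sub_le {r r' : ℝ} (hr : |r' - r| ≤ δ) :
    ‖pcPath σ x r' - pcPath σ x r‖ ≤
      ∑ j, (Icc (σ j - δ) (σ j + δ)).indicator (fun _ => ‖x j‖) r := by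
  rw [pcPath, pcPath, ← Finset.sum_sub_distrib]
  refine (norm_sum_le _ _).trans (Finset.sum_le_sum fun j _ => ?_)
  by_cases hj : r ∈ Icc (σ j - δ) (σ j + δ)
  · rw [indicator_of_mem hj]
    split_ifs <;> simp
  · have hsame : σ j ≤ r' ↔ σ j ≤ r := by grind
    simp [hsame, indicator_of_notMem hj]

theorem norm_pcPath_sub_rpow_le (hp : 1 ≤ p) {r r' : ℝ} (hr : |r' - r| ≤ δ) :
    ‖pcPath σ x r' - pcPath σ x r‖ ^ p ≤
      (i : ℝ) ^ (p - 1) *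
        ∑ j, (Icc (σ j - δ) (σ j + δ)).indicator (fun _ => ‖x j‖ ^ p) r := by
  have hp0 : 0 < p := zero_lt_one.trans_le hp
  have hpow : ∀ j, (Icc (σ j - δ) (σ j + δ)).indicator (fun _ => ‖x j‖ ^ p) r =
      |(Icc (σ j - δ) (σ j + δ)).indicator (fun _ => ‖x j‖) r| ^ p := fun j => by
    by_cases hj : r ∈ Icc (σ j - δ) (σ j + δ)
    · simp [hj]
    · simp [hj, hp0.ne']
  simp only [hpow]
  calc ‖pcPath σ x r' - pcPath σ x r‖ ^ p
      ≤ (∑ j, |(Icc (σ j - δ) (σ j + δ)).indicator (fun _ => ‖x j‖) r|) ^ p := by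
        refine Real.rpow_le_rpow (norm_nonneg _) ?_ hp0.le
        exact (norm_pcPath_sub_le σ x hr).trans (Finset.sum_le_sum fun _ _ => le_abs_self _)
    _ ≤ _ := by
        simpa only [Finset.card_univ, Fintype.card_fin] using
          Real.rpow_sum_le_const_mul_sum_rpow Finset.univ
            (fun j => (Icc (σ j - δ) (σ j + δ)).indicator (fun _ => ‖x j‖) r) hp

theorem setIntegral_indicator_Icc_le (A : Set ℝ) (hδ : 0 ≤ δ) (a : ℝ) {c : ℝ} (hc : 0 ≤ c) :
    ∫ r in A, (Icc (a - δ) (a + δ)).indicator (fun _ => c) r ≤ c * (2 * δ) := by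
  rw [integral_indicator measurableSet_Icc, setIntegral_const, smul_eq_mul, mul_comm]
  have hvol : (volume.restrict A).real (Icc (a - δ) (a + δ)) ≤ 2 * δ := by
    calc (volume.restrict A).real (Icc (a - δ) (a + δ))
        ≤ volume.real (Icc (a - δ) (a + δ)) :=
          ENNReal.toReal_mono measure_Icc_lt_top.ne (Measure.restrict_apply_le _ _)
      _ = 2 * δ := by rw [Real.volume_real_Icc_of_le (by linarith)]; ring
  gcongr

theorem pnormPow_pcPath_comp_sub_le (hT : 0 ≤ T) (hp : 1 ≤ p) (hδ : 0 ≤ δ) {τ : ℝ → ℝ}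
    (hτT : τ T = T) (hτ : ∀ r ∈ Icc 0 T, |τ r - r| ≤ δ) :
    pnormPow T p (fun r => pcPath σ x (τ r) - pcPath σ x r) ≤
      (i : ℝ) ^ (p - 1) * (∑ j, ‖x j‖ ^ p) * (2 * δ) := by
  have hp0 : 0 < p := zero_lt_one.trans_le hp
  have hint : ∀ j, IntegrableOn
      ((Icc (σ j - δ) (σ j + δ)).indicator fun _ => ‖x j‖ ^ p) (Ioc 0 T) := fun j =>
    (integrable_const _).indicator measurableSet_Icc
  rw [pnormPow, hτT, sub_self, norm_zero, Real.zero_rpow hp0.ne', zero_add,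
    intervalIntegral.integral_of_le hT]
  calc ∫ r in Ioc 0 T, ‖pcPath σ x (τ r) - pcPath σ x r‖ ^ p
      ≤ ∫ r in Ioc 0 T, (i : ℝ) ^ (p - 1) *
          ∑ j, (Icc (σ j - δ) (σ j + δ)).indicator (fun _ => ‖x j‖ ^ p) r :=
        integral_mono_of_nonneg (Eventually.of_forall fun _ => by positivity)
          ((integrable_finsetSum _ fun j _ => hint j).const_mul _)
          (ae_restrict_of_forall_mem measurableSet_Ioc fun r hr =>
            norm_pcPath_sub_rpow_le σ x hp (hτ r (Ioc_subset_Icc_self hr)))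
    _ = (i : ℝ) ^ (p - 1) * ∑ j, ∫ r in Ioc 0 T,
          (Icc (σ j - δ) (σ j + δ)).indicator (fun _ => ‖x j‖ ^ p) r := by
        rw [integral_const_mul, integral_finsetSum _ fun j _ => hint j]
    _ ≤ (i : ℝ) ^ (p - 1) * ∑ j, ‖x j‖ ^ p * (2 * δ) := by
        gcongr with j
        exact setIntegral_indicator_Icc_le _ hδ _ (by positivity)
    _ = (i : ℝ) ^ (p - 1) * (∑ j, ‖x j‖ ^ p) * (2 * δ) := by rw [← Finset.sum_mul, mul_assoc]

end JumpPath

section Penalty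

variable {T p κ : ℝ} {d i : ℕ} {s : ℝ} {η : ℝ → E d} {θ : Theta T d} {ℓ : ℝ → ℝ}

theorem Phi_nonneg (hT : 0 ≤ T) : 0 ≤ Phi T p s η θ ℓ :=
  add_nonneg (Real.rpow_nonneg (supId_nonneg _ _) _) (pnormPow_nonneg hT)

theorem Phi_id_eq_pnorm_rpow (hT : 0 ≤ T) (hp : 0 ≤ p) :
    Phi T p T η θ id = pnorm T (p + 1) (η - θ.stopped) ^ (p + 1) := by
  rw [Phi, supId_id, Real.zero_rpow (by positivity), zero_add, pnorm_rpow hT (by positivity)]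
  exact pnormPow_congr hT fun r hr =>
    congrArg (η · - θ.stopped r) (min_eq_right hr.2)

theorem supId_le_of_Phi_le (hT : 0 ≤ T) (hp : 0 ≤ p) (hΦ : Phi T p s η θ ℓ ≤ κ) :
    supId T ℓ ≤ κ ^ ((3 * p + 3) / 2) := by
  have hsup : supId T ℓ ^ (2 / (3 * p + 3)) ≤ κ :=
    (le_add_of_nonneg_right (pnormPow_nonneg hT)).trans hΦ
  have hκ : 0 ≤ κ := (Phi_nonneg hT).trans hΦ
  rw [← inv_div] at hsup
  exact (Real.rpow_inv_le_iff_of_pos (supId_nonneg T ℓ) hκ (by positivity)).1 hsup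

theorem pnorm_sub_stopped_le_of_Phi_le (hT : 0 ≤ T) (hp : 0 ≤ p)
    (hΦ : Phi T p s η θ ℓ ≤ κ) :
    pnorm T (p + 1) ((fun r => η (min s (ℓ r))) - θ.stopped) ≤ κ ^ (1 / (p + 1)) :=
  Real.rpow_le_rpow (pnormPow_nonneg hT)
    ((le_add_of_nonneg_left (Real.rpow_nonneg (supId_nonneg T ℓ) _)).trans hΦ) (by positivity)

/-- A bound on the `d_p` distance from `θ` to `(T, η)` when `Φ(T, η, θ, ℓ) ≤ κ` and `η` is the
piecewise constant path with jumps `x_1, …, x_i`; the parameter `A` stands for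
`i^(p-1) * Σ_j |x_j|^p`. The three terms control `|t - T|`, `‖η_{T∧ℓ(·)} - ω_{t∧·}‖_p` and
`‖η_{T∧ℓ(·)} - η‖_p`. -/
def penaltyModulus (T p A κ : ℝ) : ℝ :=
  κ ^ ((3 * p + 3) / 2) + κ ^ (1 / (p + 1)) * (T + 1) ^ (1 / p - 1 / (p + 1)) +
    (A * (2 * κ ^ ((3 * p + 3) / 2))) ^ (1 / p)

theorem pnorm_pcPath_timeChange_sub_le (hT : 0 < T) (hp : 1 ≤ p) (σ : Fin i → ℝ)
    (x : Fin i → E d) (hℓ : ℓ ∈ LL T θ.t T) :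
    pnorm T p ((fun r => pcPath σ x (min T (ℓ r))) - pcPath σ x) ≤
      ((i : ℝ) ^ (p - 1) * (∑ j, ‖x j‖ ^ p) * (2 * supId T ℓ)) ^ (1 / p) := by
  refine Real.rpow_le_rpow (pnormPow_nonneg hT.le) ?_ (by positivity)
  refine pnormPow_pcPath_comp_sub_le σ x hT.le hp (supId_nonneg T ℓ)
    (min_eq_left (le_apply_terminal_of_mem_LL θ.ht hT hℓ)) fun r hr => ?_
  have hclamp : |min T (ℓ r) - r| ≤ |ℓ r - r| := by grind
  exact hclamp.trans (abs_apply_sub_le_supId (monotoneOn_of_mem_LL hT.ne' hℓ) hr)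

theorem terminalDist_pcPath_le_penaltyModulus (hT : 0 < T) (hp : 1 ≤ p) (σ : Fin i → ℝ)
    (x : Fin i → E d) (hℓ : ℓ ∈ LL T θ.t T) (hΦ : Phi T p T (pcPath σ x) θ ℓ ≤ κ) :
    θ.terminalDist p (pcPath σ x) ≤
      penaltyModulus T p ((i : ℝ) ^ (p - 1) * ∑ j, ‖x j‖ ^ p) κ := by
  have hp0 : 0 < p := zero_lt_one.trans_le hp
  have hsup := supId_le_of_Phi_le hT.le hp0.le hΦ
  have hsup0 := supId_nonneg T ℓ
  set ξ : ℝ → E d := fun r => pcPath σ x (min T (ℓ r))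
  have hξ : ∀ q, MemLp ξ q (terminalMeasure T) := memLp_pcPath_comp σ x hT <|
    aemeasurable_const.min <| aemeasurable_restrict_of_monotoneOn measurableSet_Ioc <|
      (monotoneOn_of_mem_LL hT.ne' hℓ).mono Ioc_subset_Icc_self
  have htime : |θ.t - T| ≤ κ ^ ((3 * p + 3) / 2) :=
    (abs_sub_le_supId_of_mem_LL θ.ht hT hℓ).trans hsup
  have hstopped : pnorm T p (θ.stopped - ξ) ≤
      κ ^ (1 / (p + 1)) * (T + 1) ^ (1 / p - 1 / (p + 1)) := by
    rw [pnorm_sub_comm]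
    refine (pnorm_le_pnorm_mul_rpow (q := p + 1) hT.le hp0 (by linarith)
      ((hξ _).sub (θ.memLp_stopped hT _))).trans ?_
    gcongr
    exact pnorm_sub_stopped_le_of_Phi_le hT.le hp0.le hΦ
  have htimeChange : pnorm T p (ξ - pcPath σ x) ≤
      ((i : ℝ) ^ (p - 1) * (∑ j, ‖x j‖ ^ p) * (2 * κ ^ ((3 * p + 3) / 2))) ^ (1 / p) :=
    (pnorm_pcPath_timeChange_sub_le hT hp σ x hℓ).trans (by gcongr)
  have triangle := pnorm_sub_le_pnorm_sub_add_pnorm_sub hT.le hp (θ.memLp_stopped hT _) (hξ _)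
    (memLp_pcPath σ x hT _)
  rw [Theta.terminalDist, penaltyModulus]
  linarith

theorem penaltyModulus_mono {A B : ℝ} (hp : 0 ≤ p) (hκ : 0 ≤ κ) (hA : 0 ≤ A) (hAB : A ≤ B) :
    penaltyModulus T p A κ ≤ penaltyModulus T p B κ := by
  unfold penaltyModulus
  gcongr

theorem tendsto_div_natCast_rpow {K a : ℝ} (ha : 0 < a) :
    Tendsto (fun n : ℕ => (K / n) ^ a) atTop (𝓝 0) := by
  simpa only [Real.zero_rpow ha.ne'] using
    (tendsto_const_div_atTop_nhds_zero_nat K).rpow_const (p := a) (Or.inr ha.le)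

theorem tendsto_natCast_rpow_mul_div_natCast_rpow {K γ a : ℝ} (hK : 0 ≤ K) (hγ : γ < a) :
    Tendsto (fun n : ℕ => (n : ℝ) ^ γ * (K / n) ^ a) atTop (𝓝 0) := by
  have hdecay : Tendsto (fun n : ℕ => K ^ a * (n : ℝ) ^ (-(a - γ))) atTop (𝓝 0) := by
    simpa only [mul_zero, Function.comp_def] using ((tendsto_rpow_neg_atTop (sub_pos.2 hγ)).comp
      tendsto_natCast_atTop_atTop).const_mul (K ^ a)
  refine hdecay.congr' ?_
  filter_upwards [eventually_gt_atTop 0] with n hn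
  have hn0 : 0 < (n : ℝ) := Nat.cast_pos.2 hn
  rw [Real.div_rpow hK hn0.le, neg_sub, Real.rpow_sub hn0]
  ring

theorem tendsto_penaltyModulus {K γ : ℝ} (hp : 0 < p) (hK : 0 ≤ K)
    (hγ : γ < (3 * p + 3) / 2) :
    Tendsto (fun n : ℕ => penaltyModulus T p ((n : ℝ) ^ γ) (K / n)) atTop (𝓝 0) := by
  have htime := tendsto_div_natCast_rpow (K := K) (a := (3 * p + 3) / 2) (by positivity)
  have hstopped := (tendsto_div_natCast_rpow (K := K) (a := 1 / (p + 1)) (by positivity)).mul_const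
    ((T + 1) ^ (1 / p - 1 / (p + 1)))
  have htimeChange := ((tendsto_natCast_rpow_mul_div_natCast_rpow hK hγ).const_mul 2).rpow_const
    (p := 1 / p) (Or.inr (by positivity))
  convert (htime.add hstopped).add htimeChange using 2
  · simp only [penaltyModulus, mul_left_comm]
  · simp [hp.ne']

end Penalty

section Regularization

variable {T p M a s : ℝ} {d n : ℕ} {u : Theta T d → ℝ} {η : ℝ → E d}

theorem le_reg (hT : 0 ≤ T) (hM : ∀ θ, u θ ≤ M) {θ : Theta T d} {ℓ : ℝ → ℝ}
    (hθ : (θ.t, θ.path) ≠ (0, 0)) (hℓ : ℓ ∈ LL T θ.t s) :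
    u θ - n * Phi T p s η θ ℓ ≤ reg T p u n s η := by
  refine le_csSup ⟨M, ?_⟩ ⟨θ, ℓ, hθ, hℓ, rfl⟩
  rintro _ ⟨θ', ℓ', -, -, rfl⟩
  exact (sub_le_self _ (mul_nonneg n.cast_nonneg (Phi_nonneg hT))).trans (hM θ')

theorem reg_terminal_le (hT : 0 < T)
    (ha : ∀ (θ : Theta T d) (ℓ : ℝ → ℝ), ℓ ∈ LL T θ.t T → u θ - n * Phi T p T η θ ℓ ≤ a) :
    reg T p u n T η ≤ a := by
  let zeroAtT : Theta T d := ⟨T, 0, right_mem_Icc.2 hT.le, continuousOn_const, rfl⟩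
  refine csSup_le ⟨_, zeroAtT, id, by simp [zeroAtT, hT.ne'], id_mem_LL hT.ne', rfl⟩ ?_
  rintro _ ⟨θ, ℓ, -, hℓ, rfl⟩
  exact ha θ ℓ hℓ

-- A competitor whose penalty exceeds `2 M / n` loses more than the oscillation of `u`.
theorem reg_terminal_le_of_Phi_le (hT : 0 < T) (hn : 0 < n) (hM : ∀ θ, u θ ≤ M) (ha : -M ≤ a)
    (hΦ : ∀ (θ : Theta T d) (ℓ : ℝ → ℝ), ℓ ∈ LL T θ.t T → Phi T p T η θ ℓ ≤ 2 * M / n →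
      u θ ≤ a) : reg T p u n T η ≤ a := by
  have hn0 : 0 < (n : ℝ) := Nat.cast_pos.2 hn
  refine reg_terminal_le hT fun θ ℓ hℓ => ?_
  rcases le_or_gt (Phi T p T η θ ℓ) (2 * M / n) with hsmall | hlarge
  · exact (sub_le_self _ (mul_nonneg hn0.le (Phi_nonneg hT.le))).trans (hΦ θ ℓ hℓ hsmall)
  · rw [div_lt_iff₀' hn0] at hlarge
    linarith [hM θ]

theorem le_reg_of_isExtValue (hT : 0 < T) (hp : 1 ≤ p) (hM : ∀ θ, u θ ≤ M)
    (hu : DpUniformContinuous p u) {L : ℝ}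
    (hη : MemLp η (ENNReal.ofReal (p + 1)) (terminalMeasure T)) (hL : IsExtValue T p u η L) :
    L ≤ reg T p u n T η := by
  have hp0 : 0 < p := zero_lt_one.trans_le hp
  have hpp : p ≤ p + 1 := le_add_of_nonneg_right zero_le_one
  choose θ hθT hθ using fun k : ℕ =>
    exists_theta_pnorm_sub_le hT (hp.trans hpp) hη (Nat.one_div_pos_of_nat (α := ℝ) (n := k))
  have hpnorm : Tendsto (fun k => pnorm T (p + 1) (η - (θ k).stopped)) atTop (𝓝 0) :=
    squeeze_zero (fun _ => pnorm_nonneg hT.le) hθ tendsto_one_div_add_atTop_nhds_zero_nat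
  have hdist : Tendsto (fun k => (θ k).terminalDist p η) atTop (𝓝 0) := by
    refine squeeze_zero (fun k => Theta.terminalDist_nonneg hT.le _ _) (fun k => ?_)
      (by simpa only [zero_mul] using hpnorm.mul_const ((T + 1) ^ (1 / p - 1 / (p + 1))))
    rw [Theta.terminalDist, hθT, sub_self, abs_zero, zero_add, pnorm_sub_comm]
    exact pnorm_le_pnorm_mul_rpow hT.le hp0 hpp (hη.sub ((θ k).memLp_stopped hT _))
  have hvalue : Tendsto (fun k => u (θ k)) atTop (𝓝 L) :=
    hu.tendsto_extValue hT hp (hη.mono_exponent (ENNReal.ofReal_le_ofReal hpp)) hL hdist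
  have hpenalty : Tendsto (fun k => n * Phi T p T η (θ k) id) atTop (𝓝 0) := by
    simp only [Phi_id_eq_pnorm_rpow hT.le hp0.le]
    simpa only [Real.zero_rpow (by positivity : p + 1 ≠ 0), mul_zero] using
      (hpnorm.rpow_const (p := p + 1) (Or.inr (by positivity))).const_mul (n : ℝ)
  refine le_of_tendsto (by simpa only [sub_zero] using hvalue.sub hpenalty)
    (Eventually.of_forall fun k => le_reg hT.le hM ?_ ?_)
  · simp [hθT, hT.ne']
  · rw [hθT]
    exact id_mem_LL hT.ne'

theorem abs_le_of_isExtValue {L : ℝ} (hM : ∀ θ, |u θ| ≤ M) (hL : IsExtValue T p u η L) :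
    |L| ≤ M := by
  obtain ⟨θ, -, -, hθ⟩ := hL
  exact le_of_tendsto hθ.abs (Eventually.of_forall fun k => hM (θ k))

end Regularization

theorem card_rpow_mul_sum_norm_rpow_le {V : Type*} [SeminormedAddGroup V] {i : ℕ} (x : Fin i → V)
    {p a b c : ℝ} (hp : 1 ≤ p) (hc : 0 < c) (hi : (i : ℝ) ≤ c ^ a)
    (hx : (∑ j, ‖x j‖ ^ p) ^ (1 / p) ≤ c ^ b) :
    (i : ℝ) ^ (p - 1) * ∑ j, ‖x j‖ ^ p ≤ c ^ (a * (p - 1) + b * p) := by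
  have hp0 : 0 < p := zero_lt_one.trans_le hp
  have hsum : ∑ j, ‖x j‖ ^ p ≤ (c ^ b) ^ p := by
    rw [one_div] at hx
    exact (Real.rpow_inv_le_iff_of_pos (by positivity) (by positivity) hp0).1 hx
  rw [Real.rpow_add hc, Real.rpow_mul hc.le, Real.rpow_mul hc.le]
  gcongr

theorem stmt6_general {T p a b : ℝ} {d : ℕ} {u : Theta T d → ℝ} (hT : 0 < T) (hp : 1 ≤ p)
    (hub : ∃ M : ℝ, ∀ θ, |u θ| ≤ M) (hu : DpUniformContinuous p u)
    (hab : a * (p - 1) + b * p < (3 * p + 3) / 2) {ε : ℝ} (hε : 0 < ε) :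
    ∀ᶠ n : ℕ in atTop, ∀ (i : ℕ) (σ : Fin i → ℝ) (x : Fin i → E d), (i : ℝ) ≤ (n : ℝ) ^ a →
      (∑ j, ‖x j‖ ^ p) ^ (1 / p) ≤ (n : ℝ) ^ b → ∀ L, IsExtValue T p u (pcPath σ x) L →
      |reg T p u n T (pcPath σ x) - L| ≤ ε := by
  obtain ⟨M, hM⟩ := hub
  have hM' : ∀ θ, u θ ≤ |M| := fun θ => (le_of_abs_le (hM θ)).trans (le_abs_self M)
  have hp0 : 0 < p := zero_lt_one.trans_le hp
  obtain ⟨δ, hδ, huδ⟩ := hu.exists_abs_sub_extValue_le hT hp hε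
  filter_upwards [eventually_gt_atTop 0, (tendsto_penaltyModulus (T := T) hp0
    (by positivity : 0 ≤ 2 * |M|) hab).eventually (gt_mem_nhds hδ)] with n hn hmodulus
  intro i σ x hi hx L hL
  have hlower : L ≤ reg T p u n T (pcPath σ x) :=
    le_reg_of_isExtValue hT hp hM' hu (memLp_pcPath σ x hT _) hL
  have hLM : -|M| ≤ L := neg_le_of_abs_le <|
    (abs_le_of_isExtValue hM hL).trans (le_abs_self M)
  have hjumps := card_rpow_mul_sum_norm_rpow_le x hp (Nat.cast_pos.2 hn) hi hx
  have hupper : reg T p u n T (pcPath σ x) ≤ L + ε := by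
    refine reg_terminal_le_of_Phi_le hT hn hM' (by linarith) fun θ ℓ hℓ hΦ => ?_
    have hdist : θ.terminalDist p (pcPath σ x) ≤ δ :=
      (terminalDist_pcPath_le_penaltyModulus hT hp σ x hℓ hΦ).trans <|
        (penaltyModulus_mono hp0.le (by positivity) (by positivity) hjumps).trans hmodulus.le
    linarith [le_of_abs_le (huδ θ _ L (memLp_pcPath σ x hT _) hL hdist)]
  exact abs_le.2 ⟨by linarith, by linarith⟩

/-- (Lemma 5.6) `ρ_n := sup |u^{n,λ_i}(T,x) - u^{λ_i}(T,x)| → 0` as `n → ∞`, the sup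
being over all `i ≤ n^{1+1/(5p)}`, all partitions `0 = s_1 < ⋯ < s_i ≤ T`, and all
`x_1,…,x_{i-1},x` with `|x_i|_p ≤ n^{1/2+6/(5p)}`.  Here `i = m+1` and
`u^{λ_i}(T,x)` is any value `L` satisfying `IsExtValue`. -/
theorem stmt6 (T : ℝ) (hT : 0 < T) (d : ℕ) (hd : 1 ≤ d) (p : ℝ) (hp : 1 ≤ p)
    (u : Theta T d → ℝ) (hub : ∃ M : ℝ, ∀ θ : Theta T d, |u θ| ≤ M)
    (ρ : ℝ → ℝ) (hmono : Monotone ρ)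
    (hρ0 : Filter.Tendsto ρ (nhdsWithin 0 (Set.Ioi 0)) (𝓝 0))
    (huc : ∀ θ θ' : Theta T d, |u θ - u θ'| ≤ ρ (dpDist T p θ θ')) :
    ∀ ε > 0, ∃ N : ℕ, ∀ n ≥ N,
    ∀ (m : ℕ) (sVec : Fin (m + 1) → ℝ) (xVec : Fin (m + 1) → E d),
      sVec 0 = 0 → StrictMono sVec → sVec (Fin.last m) ≤ T →
      ((m : ℝ) + 1) ≤ (n : ℝ) ^ ((1 : ℝ) + 1 / (5 * p)) →
      (∑ j, ‖xVec j‖ ^ p) ^ (1 / p) ≤ (n : ℝ) ^ ((1 : ℝ) / 2 + 6 / (5 * p)) →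
    ∀ L : ℝ, IsExtValue T p u (pcPath sVec xVec) L →
      |reg T p u n T (pcPath sVec xVec) - L| ≤ ε := by
  intro ε hε
  have hexponent : (1 + 1 / (5 * p)) * (p - 1) + (1 / 2 + 6 / (5 * p)) * p < (3 * p + 3) / 2 := by
    field_simp
    nlinarith
  obtain ⟨N, hN⟩ := eventually_atTop.1 <| stmt6_general hT hp hub
    (DpUniformContinuous.of_modulus hmono hρ0 huc) hexponent hε
  exact ⟨N, fun n hn m s x _ _ _ hm hx => hN n hn (m + 1) s x (by exact_mod_cast hm) hx⟩
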